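/- arXiv:1405.4688 — 2 statements merged into one kernel-verified Lean document; each statement's English description precedes it below -/
import Mathlib

section
/- Let 0 < p ≤ 1. The map (A, B) ↦ [(p+1) ∫₀¹ (λA + (1-λ)B)^p dλ]⁻¹ is jointly convex on pairs of n×n positive definite complex matrices (in the Loewner order), and for positive real scalars s ≠ t (i.e., 1×1 matrices) its value is (t − s)/(t^{p+1} − s^{p+1}), while at s = t its value is t^{-p}/(p+1). Thus the function F(s,t) = (t−s)/(t^{p+1}−s^{p+1}) for s ≠ t, F(t,t) = t^{-p}/(p+1), extends to a jointly convex map on pairs of positive definite matrices. -/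
open Matrix MeasureTheory
open scoped ComplexOrder

attribute [local instance] Matrix.normedAddCommGroup Matrix.normedSpace

/-- Matrix power by a real exponent via the functional calculus
(unitary diagonalization for Hermitian matrices; junk value otherwise). -/
noncomputable def mpow {n : ℕ} (A : Matrix (Fin n) (Fin n) ℂ) (q : ℝ) :
    Matrix (Fin n) (Fin n) ℂ :=
  if hA : A.IsHermitian then
    (hA.eigenvectorUnitary : Matrix (Fin n) (Fin n) ℂ) *
      Matrix.diagonal (fun i => ((hA.eigenvalues i ^ q : ℝ) : ℂ)) *
      (star (hA.eigenvectorUnitary : Matrix (Fin n) (Fin n) ℂ))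
  else 0

/-- `F(A,B) = [(p+1) ∫₀¹ (λA + (1-λ)B)^p dλ]⁻¹`. -/
noncomputable def Fmap {n : ℕ} (p : ℝ) (A B : Matrix (Fin n) (Fin n) ℂ) :
    Matrix (Fin n) (Fin n) ℂ :=
  ((p + 1) • ∫ l in Set.Icc (0 : ℝ) 1, mpow (l • A + (1 - l) • B) p)⁻¹

section L2
open scoped MatrixOrder Matrix.Norms.L2Operator

theorem mpow_eq_rpow {n : ℕ} {A : Matrix (Fin n) (Fin n) ℂ} (hA : A.PosSemidef) (q : ℝ) :
    mpow A q = A ^ q := by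
  have h := hA.isHermitian
  rw [CFC.rpow_eq_cfc_real (a := A) hA.nonneg, h.cfc_eq, mpow, dif_pos h]
  rfl

theorem mpow_posDef {n : ℕ} {A : Matrix (Fin n) (Fin n) ℂ} (hA : A.PosDef) (q : ℝ) :
    (mpow A q).PosDef := by
  rw [mpow_eq_rpow hA.posSemidef, ← Matrix.isStrictlyPositive_iff_posDef]
  have := hA.isStrictlyPositive
  exact IsStrictlyPositive.rpow A q this

theorem mpow_continuousOn {n : ℕ} (q : ℝ) :
    ContinuousOn (fun A : Matrix (Fin n) (Fin n) ℂ => mpow A q) {A | A.PosDef} := by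
  have h := CFC.continuousOn_rpow (A := Matrix (Fin n) (Fin n) ℂ) q
  have e : {a : Matrix (Fin n) (Fin n) ℂ | IsStrictlyPositive a} = {A | A.PosDef} := by
    ext A; exact Matrix.isStrictlyPositive_iff_posDef
  rw [e] at h
  exact h.congr fun A hA => mpow_eq_rpow (Matrix.PosDef.posSemidef hA) q

theorem mpow_concave {n : ℕ} {A B : Matrix (Fin n) (Fin n) ℂ} (hA : A.PosSemidef)
    (hB : B.PosSemidef) {q : ℝ} (h0 : 0 ≤ q) (h1 : q ≤ 1) {α : ℝ} (ha : 0 ≤ α) (hb : α ≤ 1) :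
    (mpow (α • A + (1 - α) • B) q - (α • mpow A q + (1 - α) • mpow B q)).PosSemidef := by
  have h := (CFC.concaveOn_rpow (A := Matrix (Fin n) (Fin n) ℂ) (p := q) ⟨h0, h1⟩).2
    (x := A) hA.nonneg (y := B) hB.nonneg ha (sub_nonneg.2 hb) (by ring)
  rw [mpow_eq_rpow hA, mpow_eq_rpow hB, mpow_eq_rpow]
  · exact h
  · exact (hA.smul ha).add (hB.smul (sub_nonneg.2 hb))

theorem inv_convex {n : ℕ} {A B : Matrix (Fin n) (Fin n) ℂ} (hA : A.PosDef)
    (hB : B.PosDef) {α : ℝ} (ha : 0 ≤ α) (hb : α ≤ 1) :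
    ((α • A⁻¹ + (1 - α) • B⁻¹) - (α • A + (1 - α) • B)⁻¹).PosSemidef := by
  have h := (CStarAlgebra.convexOn_ringInverse (A := Matrix (Fin n) (Fin n) ℂ)).2
    (x := A) hA.isStrictlyPositive (y := B) hB.isStrictlyPositive ha (sub_nonneg.2 hb) (by ring)
  simp only [Matrix.nonsing_inv_eq_ringInverse]
  exact h

theorem inv_antitone {n : ℕ} {A B : Matrix (Fin n) (Fin n) ℂ} (hA : A.PosDef)
    (hB : B.PosDef) (h : (B - A).PosSemidef) : (A⁻¹ - B⁻¹).PosSemidef := by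
  have := CStarAlgebra.antitoneOn_ringInverse (A := Matrix (Fin n) (Fin n) ℂ)
    (a := A) hA.isStrictlyPositive (b := B) hB.isStrictlyPositive h
  simp only [Matrix.nonsing_inv_eq_ringInverse]
  exact this

theorem mpow_scalar {n : ℕ} {c : ℝ} (hc : 0 ≤ c) (q : ℝ) :
    mpow (c • (1 : Matrix (Fin n) (Fin n) ℂ)) q = (c ^ q) • 1 := by
  have hA : (c • (1 : Matrix (Fin n) (Fin n) ℂ)).PosSemidef := Matrix.PosSemidef.one.smul hc
  rw [mpow_eq_rpow hA, CFC.rpow_eq_cfc_real (a := c • (1 : Matrix (Fin n) (Fin n) ℂ)) hA.nonneg,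
    ← Algebra.algebraMap_eq_smul_one, cfc_algebraMap, Algebra.algebraMap_eq_smul_one]
end L2

theorem comb_posDef {n : ℕ} {A B : Matrix (Fin n) (Fin n) ℂ} (hA : A.PosDef)
    (hB : B.PosDef) {α : ℝ} (ha : 0 ≤ α) (hb : α ≤ 1) : (α • A + (1 - α) • B).PosDef := by
  rcases ha.eq_or_lt with rfl | ha
  · simpa using hB
  · exact (hA.smul ha).add_posSemidef (hB.posSemidef.smul (sub_nonneg.2 hb))

noncomputable def quad {n : ℕ} (x : Fin n → ℂ) : Matrix (Fin n) (Fin n) ℂ →L[ℝ] ℂ :=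
  LinearMap.toContinuousLinearMap
    { toFun := fun M => star x ⬝ᵥ (M *ᵥ x)
      map_add' := fun M N => by simp [Matrix.add_mulVec, dotProduct_add]
      map_smul' := fun c M => by simp [Matrix.smul_mulVec] }

noncomputable def ctr {n : ℕ} : Matrix (Fin n) (Fin n) ℂ →L[ℝ] Matrix (Fin n) (Fin n) ℂ :=
  LinearMap.toContinuousLinearMap
    { toFun := fun M => Mᴴ
      map_add' := fun M N => by simp
      map_smul' := fun c M => by simp }

/-- Integrability over the unit interval, for the topology of the entrywise sup norm. -/
abbrev MInt {n : ℕ} (M : ℝ → Matrix (Fin n) (Fin n) ℂ) : Prop :=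
  @IntegrableOn ℝ (Matrix (Fin n) (Fin n) ℂ) _ PseudoMetricSpace.toUniformSpace.toTopologicalSpace
    _ M (Set.Icc (0:ℝ) 1) volume

theorem int_herm {n : ℕ} {M : ℝ → Matrix (Fin n) (Fin n) ℂ}
    (hM : MInt M) (h : ∀ l ∈ Set.Icc (0:ℝ) 1, (M l).IsHermitian) :
    (∫ l in Set.Icc (0:ℝ) 1, M l).IsHermitian := by
  have := (ctr (n := n)).integral_comp_comm hM
  change _ = (∫ l in Set.Icc (0:ℝ) 1, M l)ᴴ at this
  rw [Matrix.IsHermitian, ← this]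
  exact setIntegral_congr_fun measurableSet_Icc fun l hl => h l hl

theorem int_quad {n : ℕ} {M : ℝ → Matrix (Fin n) (Fin n) ℂ}
    (hM : MInt M) (h : ∀ l ∈ Set.Icc (0:ℝ) 1, (M l).IsHermitian)
    (x : Fin n → ℂ) : star x ⬝ᵥ ((∫ l in Set.Icc (0:ℝ) 1, M l) *ᵥ x) =
      ((∫ l in Set.Icc (0:ℝ) 1, (quad x (M l)).re : ℝ) : ℂ) := by
  have := (quad x).integral_comp_comm hM
  change _ = star x ⬝ᵥ ((∫ l in Set.Icc (0:ℝ) 1, M l) *ᵥ x) at this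
  rw [← this, ← integral_complex_ofReal]
  refine setIntegral_congr_fun measurableSet_Icc fun l hl => ?_
  exact Complex.ext rfl ((h l hl).im_star_dotProduct_mulVec_self x)

theorem int_posSemidef {n : ℕ} {M : ℝ → Matrix (Fin n) (Fin n) ℂ}
    (hM : MInt M) (h : ∀ l ∈ Set.Icc (0:ℝ) 1, (M l).PosSemidef) :
    (∫ l in Set.Icc (0:ℝ) 1, M l).PosSemidef := by
  refine Matrix.PosSemidef.of_dotProduct_mulVec_nonneg (int_herm hM fun l hl => (h l hl).isHermitian) fun x => ?_
  rw [int_quad hM (fun l hl => (h l hl).isHermitian)]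
  refine Complex.zero_le_real.2 (setIntegral_nonneg measurableSet_Icc fun l hl => ?_)
  exact (Complex.le_def.1 ((h l hl).dotProduct_mulVec_nonneg x)).1

theorem int_posDef {n : ℕ} {M : ℝ → Matrix (Fin n) (Fin n) ℂ}
    (hM : MInt M) (h : ∀ l ∈ Set.Icc (0:ℝ) 1, (M l).PosDef) :
    (∫ l in Set.Icc (0:ℝ) 1, M l).PosDef := by
  refine Matrix.PosDef.of_dotProduct_mulVec_pos (int_herm hM fun l hl => (h l hl).isHermitian) fun x hx => ?_
  rw [int_quad hM (fun l hl => (h l hl).isHermitian)]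
  refine Complex.zero_lt_real.2 ?_
  rw [integral_Icc_eq_integral_Ioc, ← intervalIntegral.integral_of_le zero_le_one]
  refine intervalIntegral.intervalIntegral_pos_of_pos_on ?_ (fun l hl => ?_) zero_lt_one
  · rw [intervalIntegrable_iff_integrableOn_Icc_of_le zero_le_one]
    exact ((Complex.reCLM.comp (quad x)).integrable_comp hM)
  · exact (Complex.lt_def.1 ((h l (Set.Ioo_subset_Icc_self hl)).dotProduct_mulVec_pos hx)).1

theorem mpow_int {n : ℕ} {A B : Matrix (Fin n) (Fin n) ℂ} (hA : A.PosDef) (hB : B.PosDef) (p : ℝ) :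
    MInt (fun l : ℝ => mpow (l • A + (1 - l) • B) p) := by
  refine ContinuousOn.integrableOn_compact isCompact_Icc ?_
  refine (mpow_continuousOn p).comp (f := fun l : ℝ => l • A + (1 - l) • B) ?_ ?_
  · fun_prop
  · exact fun l hl => comb_posDef hA hB hl.1 hl.2

theorem convex_part (p : ℝ) (hp0 : 0 < p) (hp1 : p ≤ 1) 
    (n : ℕ) (A₁ A₂ B₁ B₂ : Matrix (Fin n) (Fin n) ℂ)
    (hA₁ : A₁.PosDef) (hA₂ : A₂.PosDef) (hB₁ : B₁.PosDef) (hB₂ : B₂.PosDef)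
    (α : ℝ) (ha : 0 ≤ α) (hb : α ≤ 1) :
      ((α • Fmap p A₁ B₁ + (1 - α) • Fmap p A₂ B₂) -
        Fmap p (α • A₁ + (1 - α) • A₂) (α • B₁ + (1 - α) • B₂)).PosSemidef := by
  have hp : 0 < p + 1 := by linarith
  have key : ∀ {A B : Matrix (Fin n) (Fin n) ℂ}, A.PosDef → B.PosDef →
      ((p + 1) • ∫ l in Set.Icc (0 : ℝ) 1, mpow (l • A + (1 - l) • B) p).PosDef :=
    fun hA hB => (int_posDef (mpow_int hA hB p)
      fun l hl => mpow_posDef (comb_posDef hA hB hl.1 hl.2) p).smul hp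
  have hA := comb_posDef hA₁ hA₂ ha hb
  have hB := comb_posDef hB₁ hB₂ ha hb
  have k1 := key hA₁ hB₁
  have k2 := key hA₂ hB₂
  have k := key hA hB
  have h1 := inv_convex k1 k2 ha hb
  have h2 := inv_antitone (comb_posDef k1 k2 ha hb) k ?_
  · have := h1.add h2
    rw [sub_add_sub_cancel] at this
    exact this
  · have i1 := mpow_int hA₁ hB₁ p
    have i2 := mpow_int hA₂ hB₂ p
    have i := mpow_int hA hB p
    have j1 := i1.smul α
    have j2 := i2.smul (1 - α)
    have := (int_posSemidef (i.sub (j1.add j2)) fun l hl => ?_).smul hp.le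
    · have e := integral_sub i (j1.add j2)
      have e' := integral_add j1 j2
      simp only [Pi.sub_apply, Pi.add_apply, Pi.smul_apply] at this e e'
      rw [e, e', integral_smul, integral_smul, smul_sub, smul_add, smul_comm _ α,
        smul_comm _ (1 - α)] at this
      exact this
    · have := mpow_concave (comb_posDef hA₁ hB₁ hl.1 hl.2).posSemidef
        (comb_posDef hA₂ hB₂ hl.1 hl.2).posSemidef hp0.le hp1 ha hb
      simp only [Pi.sub_apply, Pi.add_apply, Pi.smul_apply]
      convert this using 3
      module

theorem Fmap_scalar (p : ℝ) {s t : ℝ} (hs : 0 < s) (ht : 0 < t) :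
    Fmap p (s • (1 : Matrix (Fin 1) (Fin 1) ℂ)) (t • 1) =
      ((p + 1) * ∫ l in (0:ℝ)..1, ((s - t) * l + t) ^ p)⁻¹ • 1 := by
  have e : ∫ l in Set.Icc (0 : ℝ) 1,
      mpow (l • s • (1 : Matrix (Fin 1) (Fin 1) ℂ) + (1 - l) • t • 1) p =
      (∫ l in (0:ℝ)..1, ((s - t) * l + t) ^ p) • 1 := by
    rw [intervalIntegral.integral_of_le zero_le_one, ← integral_Icc_eq_integral_Ioc,
      ← integral_smul_const]
    refine setIntegral_congr_fun measurableSet_Icc fun l hl => ?_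
    have : 0 ≤ (s - t) * l + t := by nlinarith [hl.1, hl.2]
    rw [← mpow_scalar this]
    congr 1
    module
  rw [Fmap, e, smul_smul]
  generalize (p + 1) * ∫ l in (0:ℝ)..1, ((s - t) * l + t) ^ p = c
  ext i j
  fin_cases i; fin_cases j
  simp

theorem stmt4 (p : ℝ) (hp0 : 0 < p) (hp1 : p ≤ 1) :
    (∀ (n : ℕ) (A₁ A₂ B₁ B₂ : Matrix (Fin n) (Fin n) ℂ),
      A₁.PosDef → A₂.PosDef → B₁.PosDef → B₂.PosDef →
      ∀ α : ℝ, 0 ≤ α → α ≤ 1 →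
      ((α • Fmap p A₁ B₁ + (1 - α) • Fmap p A₂ B₂) -
        Fmap p (α • A₁ + (1 - α) • A₂) (α • B₁ + (1 - α) • B₂)).PosSemidef) ∧
    (∀ s t : ℝ, 0 < s → 0 < t → s ≠ t →
      Fmap p (s • (1 : Matrix (Fin 1) (Fin 1) ℂ)) (t • 1) =
        ((t - s) / (t ^ (p + 1) - s ^ (p + 1))) • 1) ∧
    (∀ t : ℝ, 0 < t →
      Fmap p (t • (1 : Matrix (Fin 1) (Fin 1) ℂ)) (t • 1) =
        (t ^ (-p) / (p + 1)) • 1) := by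
  refine ⟨convex_part p hp0 hp1, fun s t hs ht hst => ?_, fun t ht => ?_⟩
  · have hp : p + 1 ≠ 0 := by linarith
    have h := intervalIntegral.integral_comp_mul_add (a := 0) (b := 1) (fun x : ℝ => x ^ p)
      (sub_ne_zero.2 hst) t
    rw [Fmap_scalar p hs ht, h, integral_rpow (Or.inl (by linarith))]
    congr 1
    have e1 : (s - t) * 0 + t = t := by ring
    have e2 : (s - t) * 1 + t = s := by ring
    rw [e1, e2, smul_eq_mul]
    have e3 : (p + 1) * ((s - t)⁻¹ * ((s ^ (p + 1) - t ^ (p + 1)) / (p + 1))) =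
        (t ^ (p + 1) - s ^ (p + 1)) / (t - s) := by
      have := sub_ne_zero.2 hst
      have := sub_ne_zero.2 hst.symm
      field_simp
      ring
    rw [e3, inv_div]
  · rw [Fmap_scalar p ht ht]
    congr 1
    simp [Real.rpow_neg ht.le]
    ring
end

section
/- Let 0 < p ≤ 1. The map (A, B, C) ↦ (p+1) ∫₀¹ C^{1/2}(C^{-1/2}(λA + (1-λ)B)C^{-1/2})^p C^{1/2} dλ is jointly concave on triples of n×n positive definite complex matrices (in the Loewner order), and for positive real scalars t₁ ≠ t₂ and t₃ > 0 (i.e., 1×1 matrices) its value is ((t₁^{p+1} − t₂^{p+1})/(t₁ − t₂))·t₃^{1-p}, while for t₁ = t₂ it is (p+1)t₁^p t₃^{1-p}. Thus the function F₃(t₁,t₂,t₃) = ((t₁^{p+1}−t₂^{p+1})/(t₁−t₂))t₃^{1-p} (with value (1/(p+1))t₁^p t₃^{1-p} when t₁ = t₂, up to the factor p+1) extends to a jointly concave map on triples of positive definite matrices. -/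
open Matrix MeasureTheory
open scoped ComplexOrder

attribute [local instance] Matrix.normedAddCommGroup Matrix.normedSpace

/-- `(A,B,C) ↦ (p+1) ∫₀¹ C^{1/2} (C^{-1/2}(λA + (1-λ)B)C^{-1/2})^p C^{1/2} dλ`. -/
noncomputable def F3map {n : ℕ} (p : ℝ) (A B C : Matrix (Fin n) (Fin n) ℂ) :
    Matrix (Fin n) (Fin n) ℂ :=
  (p + 1) • ∫ l in Set.Icc (0 : ℝ) 1,
    mpow C (1 / 2) *
      mpow (mpow C (-(1 / 2)) * (l • A + (1 - l) • B) * mpow C (-(1 / 2))) p *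
        mpow C (1 / 2)

section aux
variable {n : ℕ}

lemma mpow_eq_cfc {A : Matrix (Fin n) (Fin n) ℂ} (hA : A.IsHermitian) (q : ℝ) :
    mpow A q = cfc (fun x : ℝ => x ^ q) A := by
  rw [hA.cfc_eq, mpow, dif_pos hA, Matrix.IsHermitian.cfc, Unitary.conjStarAlgAut_apply]
  rfl

lemma mpow_herm {A : Matrix (Fin n) (Fin n) ℂ} (hA : A.IsHermitian) (q : ℝ) :
    (mpow A q).IsHermitian := by
  rw [mpow_eq_cfc hA]
  exact cfc_predicate (p := IsSelfAdjoint) _ A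

lemma spec_pos {A : Matrix (Fin n) (Fin n) ℂ} (hA : A.PosDef) {x : ℝ} (hx : x ∈ spectrum ℝ A) :
    0 < x := by
  rw [hA.isHermitian.spectrum_real_eq_range_eigenvalues] at hx
  obtain ⟨i, rfl⟩ := hx
  exact hA.eigenvalues_pos i

lemma cont_spec (A : Matrix (Fin n) (Fin n) ℂ) (f : ℝ → ℝ) : ContinuousOn f (spectrum ℝ A) :=
  (Matrix.finite_real_spectrum (A := A)).continuousOn f

lemma mpow_mul {A : Matrix (Fin n) (Fin n) ℂ} (hA : A.PosDef) (q r : ℝ) :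
    mpow A q * mpow A r = mpow A (q + r) := by
  rw [mpow_eq_cfc hA.isHermitian, mpow_eq_cfc hA.isHermitian, mpow_eq_cfc hA.isHermitian,
    ← cfc_mul _ _ A (cont_spec _ _) (cont_spec _ _)]
  apply cfc_congr
  intro x hx
  exact (Real.rpow_add (spec_pos hA hx) _ _).symm

lemma mpow_zero {A : Matrix (Fin n) (Fin n) ℂ} (hA : A.PosDef) :
    mpow A 0 = 1 := by
  rw [mpow_eq_cfc hA.isHermitian]
  simp only [Real.rpow_zero]
  exact cfc_const_one ℝ A hA.isHermitian

lemma mpow_one {A : Matrix (Fin n) (Fin n) ℂ} (hA : A.PosDef) :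
    mpow A 1 = A := by
  rw [mpow_eq_cfc hA.isHermitian]
  simp only [Real.rpow_one]
  exact cfc_id' ℝ A hA.isHermitian

lemma mpow_half_neg {A : Matrix (Fin n) (Fin n) ℂ} (hA : A.PosDef) :
    mpow A (1/2) * mpow A (-(1/2)) = 1 := by
  rw [mpow_mul hA, add_neg_cancel, mpow_zero hA]

lemma mpow_neg_half {A : Matrix (Fin n) (Fin n) ℂ} (hA : A.PosDef) :
    mpow A (-(1/2)) * mpow A (1/2) = 1 := by
  rw [mpow_mul hA, neg_add_cancel, mpow_zero hA]

lemma mpow_half_half {A : Matrix (Fin n) (Fin n) ℂ} (hA : A.PosDef) :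
    mpow A (1/2) * mpow A (1/2) = A := by
  rw [mpow_mul hA, add_halves, mpow_one hA]

lemma mpow_smul_one {t : ℝ} (q : ℝ) :
    mpow (t • (1 : Matrix (Fin n) (Fin n) ℂ)) q = (t ^ q) • 1 := by
  have h : (t • (1 : Matrix (Fin n) (Fin n) ℂ)).IsHermitian := by
    unfold Matrix.IsHermitian; simp
  rw [mpow_eq_cfc h, ← Algebra.algebraMap_eq_smul_one, ← Algebra.algebraMap_eq_smul_one]
  exact cfc_algebraMap t _

/-- resolvent inequality, one term -/
lemma resolv_one {P : Matrix (Fin n) (Fin n) ℂ} (hP : P.PosDef) (X Z : Matrix (Fin n) (Fin n) ℂ) :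
    (Xᴴ * P⁻¹ * X - (Xᴴ * Z + Zᴴ * X - Zᴴ * P * Z)).PosSemidef := by
  have h := hP.posSemidef.conjTranspose_mul_mul_same (P⁻¹ * X - Z)
  have hu : IsUnit P.det := hP.isUnit.map Matrix.detMonoidHom
  have h1 : P * P⁻¹ = 1 := Matrix.mul_nonsing_inv P hu
  have h2 : P⁻¹ * P = 1 := Matrix.nonsing_inv_mul P hu
  have h3 : (P⁻¹)ᴴ = P⁻¹ := hP.isHermitian.inv
  convert h using 1
  rw [conjTranspose_sub, conjTranspose_mul, h3]
  have : (Xᴴ * P⁻¹ - Zᴴ) * P * (P⁻¹ * X - Z) = Xᴴ * (P⁻¹ * P) * P⁻¹ * X - Xᴴ * (P⁻¹ * P) * Z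
     - Zᴴ * (P * P⁻¹) * X + Zᴴ * P * Z := by noncomm_ring
  rw [this, h1, h2]
  noncomm_ring

lemma resolv_two {P Q X Y : Matrix (Fin n) (Fin n) ℂ} (hP : P.PosDef) (hQ : Q.PosDef)
    {a b : ℝ} (ha : 0 ≤ a) (hb : 0 ≤ b) (hXY : a • (Xᴴ * X) + b • (Yᴴ * Y) = 1)
    (hR : (a • (Xᴴ * P * X) + b • (Yᴴ * Q * Y)).PosDef) :
    (a • (Xᴴ * P⁻¹ * X) + b • (Yᴴ * Q⁻¹ * Y)
      - (a • (Xᴴ * P * X) + b • (Yᴴ * Q * Y))⁻¹).PosSemidef := by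
  set R := a • (Xᴴ * P * X) + b • (Yᴴ * Q * Y) with hRdef
  have hu : IsUnit R.det := hR.isUnit.map Matrix.detMonoidHom
  have h2 : R⁻¹ * R = 1 := Matrix.nonsing_inv_mul R hu
  have h3 : (R⁻¹)ᴴ = R⁻¹ := hR.isHermitian.inv
  have hx := (resolv_one hP X (X * R⁻¹)).smul ha
  have hy := (resolv_one hQ Y (Y * R⁻¹)).smul hb
  convert hx.add hy using 1
  rw [conjTranspose_mul, conjTranspose_mul, h3]
  have e : R⁻¹ = (a • (Xᴴ * X) + b • (Yᴴ * Y)) * R⁻¹ + R⁻¹ * (a • (Xᴴ * X) + b • (Yᴴ * Y))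
     - R⁻¹ * R * R⁻¹ := by rw [hXY, h2]; simp
  conv_lhs => rw [e]
  nth_rewrite 4 [hRdef]
  simp only [add_mul, mul_add, smul_sub, smul_add, smul_mul_assoc, mul_smul_comm, Matrix.mul_assoc]
  abel

/-- real quadratic form -/
noncomputable def qf (M : Matrix (Fin n) (Fin n) ℂ) (v : Fin n → ℂ) : ℝ :=
  (star v ⬝ᵥ (M *ᵥ v)).re

lemma qf_add (M N : Matrix (Fin n) (Fin n) ℂ) (v) : qf (M + N) v = qf M v + qf N v := by
  simp [qf, add_mulVec]
lemma qf_sub (M N : Matrix (Fin n) (Fin n) ℂ) (v) : qf (M - N) v = qf M v - qf N v := by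
  simp [qf, sub_mulVec]
lemma qf_smul (a : ℝ) (M : Matrix (Fin n) (Fin n) ℂ) (v) : qf (a • M) v = a * qf M v := by
  simp [qf, smul_mulVec]
lemma qf_conj (M X : Matrix (Fin n) (Fin n) ℂ) (v) : qf (Xᴴ * M * X) v = qf M (X *ᵥ v) := by
  simp [qf, star_mulVec, ← mulVec_mulVec, dotProduct_mulVec, vecMul_vecMul, Matrix.mul_assoc]

lemma psd_of_qf {M : Matrix (Fin n) (Fin n) ℂ} (hM : M.IsHermitian) (h : ∀ v, 0 ≤ qf M v) :
    M.PosSemidef := by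
  refine PosSemidef.of_dotProduct_mulVec_nonneg hM fun v => ?_
  rw [Complex.nonneg_iff]
  refine ⟨h v, ?_⟩
  have := hM.im_star_dotProduct_mulVec_self v
  exact this.symm

lemma qf_nonneg {M : Matrix (Fin n) (Fin n) ℂ} (hM : M.PosSemidef) (v) : 0 ≤ qf M v :=
  (Complex.nonneg_iff.mp (hM.dotProduct_mulVec_nonneg v)).1

lemma qf_cfc {M : Matrix (Fin n) (Fin n) ℂ} (hM : M.IsHermitian) (v : Fin n → ℂ) :
    ∃ w : Fin n → ℝ, ∀ f : ℝ → ℝ, qf (cfc f M) v = ∑ i, f (hM.eigenvalues i) * w i := by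
  let U : Matrix (Fin n) (Fin n) ℂ := hM.eigenvectorUnitary
  refine ⟨fun i => Complex.normSq ((Uᴴ *ᵥ v) i), fun f => ?_⟩
  have : cfc f M = (Uᴴ)ᴴ * Matrix.diagonal (fun i => ((f (hM.eigenvalues i) : ℝ) : ℂ)) * Uᴴ := by
    rw [hM.cfc_eq, Matrix.IsHermitian.cfc, Unitary.conjStarAlgAut_apply]
    simp only [conjTranspose_conjTranspose]
    rfl
  rw [this, qf_conj, qf]
  simp only [dotProduct, mulVec_diagonal, Complex.re_sum]
  refine Finset.sum_congr rfl fun i _ => ?_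
  simp [Complex.normSq_apply]
  ring
end aux
section aux2
variable {n : ℕ}

lemma qf_int {p : ℝ} {M : Matrix (Fin n) (Fin n) ℂ} (hM : M.PosDef) (v : Fin n → ℂ)
    {μ : Measure ℝ} (hμ : ∀ x ∈ Set.Ici (0:ℝ),
      (IntegrableOn (fun t => Real.rpowIntegrand₀₁ p t x) (Set.Ioi 0) μ)
      ∧ x ^ p = ∫ t in Set.Ioi 0, Real.rpowIntegrand₀₁ p t x ∂μ) :
    IntegrableOn (fun t => qf (cfc (Real.rpowIntegrand₀₁ p t) M) v) (Set.Ioi 0) μ ∧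
    qf (mpow M p) v = ∫ t in Set.Ioi 0, qf (cfc (Real.rpowIntegrand₀₁ p t) M) v ∂μ := by
  obtain ⟨w, hw⟩ := qf_cfc hM.isHermitian v
  have hi : ∀ i ∈ Finset.univ, Integrable
      (fun t => Real.rpowIntegrand₀₁ p t (hM.isHermitian.eigenvalues i) * w i)
      (μ.restrict (Set.Ioi 0)) :=
    fun i _ => ((hμ _ (hM.eigenvalues_pos i).le).1).mul_const _
  simp only [mpow_eq_cfc hM.isHermitian, hw]
  refine ⟨integrable_finsetSum _ hi, ?_⟩
  rw [integral_finsetSum _ hi]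
  refine Finset.sum_congr rfl fun i _ => ?_
  rw [integral_mul_const, (hμ _ (hM.eigenvalues_pos i).le).2]

lemma cfc_integrand {p t : ℝ} (hp : p ≠ 1) (ht : 0 < t) {M : Matrix (Fin n) (Fin n) ℂ}
    (hM : M.PosDef) :
    cfc (Real.rpowIntegrand₀₁ p t) M = t ^ (p-1) • 1 - t ^ p • (t • 1 + M)⁻¹ := by
  have hsa : IsSelfAdjoint M := hM.isHermitian
  have hinv : cfc (fun x : ℝ => (t + x)⁻¹) M = (t • 1 + M)⁻¹ := by
    symm
    apply Matrix.inv_eq_left_inv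
    have h1 : t • 1 + M = cfc (fun x : ℝ => t + x) M := by
      rw [cfc_const_add t (fun x => x) M (cont_spec _ _) hsa, cfc_id' ℝ M hsa,
        Algebra.algebraMap_eq_smul_one]
    rw [h1, ← cfc_mul _ _ M (cont_spec _ _) (cont_spec _ _), ← cfc_const_one ℝ M hsa]
    apply cfc_congr
    intro x hx
    have := spec_pos hM hx
    have : t + x ≠ 0 := by positivity
    simp [this]
  rw [Real.rpowIntegrand₀₁_eq_sub hp ht, cfc_sub _ _ M (cont_spec _ _) (cont_spec _ _),
    cfc_const _ M hsa, cfc_const_mul _ _ M (cont_spec _ _), hinv, Algebra.algebraMap_eq_smul_one]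

lemma posDef_shift {t : ℝ} (ht : 0 < t) {M : Matrix (Fin n) (Fin n) ℂ}
    (hM : M.PosDef) : (t • 1 + M).PosDef :=
  (PosDef.one.smul ht).add hM

/-- operator Jensen inequality for powers in (0,1] -/
lemma jensen {p : ℝ} (hp0 : 0 < p) (hp1 : p ≤ 1) {M N X Y : Matrix (Fin n) (Fin n) ℂ}
    (hM : M.PosDef) (hN : N.PosDef) {a b : ℝ} (ha : 0 ≤ a) (hb : 0 ≤ b)
    (hXY : a • (Xᴴ * X) + b • (Yᴴ * Y) = 1)
    (hR : (a • (Xᴴ * M * X) + b • (Yᴴ * N * Y)).PosDef) :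
    (mpow (a • (Xᴴ * M * X) + b • (Yᴴ * N * Y)) p
      - (a • (Xᴴ * mpow M p * X) + b • (Yᴴ * mpow N p * Y))).PosSemidef := by
  rcases hp1.eq_or_lt with rfl | hp1
  · rw [mpow_one hM, mpow_one hN, mpow_one hR, sub_self]
    exact PosSemidef.zero
  apply psd_of_qf
  · refine (mpow_herm hR.isHermitian p).sub (IsHermitian.add ?_ ?_)
    · exact ((isHermitian_conjTranspose_mul_mul X (mpow_herm hM.isHermitian p))).smul (IsSelfAdjoint.all a)
    · exact ((isHermitian_conjTranspose_mul_mul Y (mpow_herm hN.isHermitian p))).smul (IsSelfAdjoint.all b)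
  intro v
  obtain ⟨μ, hμ⟩ := Real.exists_measure_rpow_eq_integral_rpowIntegrand₀₁ (p := p) ⟨hp0, hp1⟩
  obtain ⟨i1, e1⟩ := qf_int hR v hμ
  obtain ⟨i2, e2⟩ := qf_int hM (X *ᵥ v) hμ
  obtain ⟨i3, e3⟩ := qf_int hN (Y *ᵥ v) hμ
  have i4 : IntegrableOn (fun t => a * qf (cfc (Real.rpowIntegrand₀₁ p t) M) (X *ᵥ v)
      + b * qf (cfc (Real.rpowIntegrand₀₁ p t) N) (Y *ᵥ v)) (Set.Ioi 0) μ :=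
    (i2.const_mul a).add (i3.const_mul b)
  rw [qf_sub, qf_add, qf_smul, qf_smul, qf_conj, qf_conj, e1, e2, e3,
    ← integral_const_mul, ← integral_const_mul,
    ← integral_add (i2.const_mul a) (i3.const_mul b),
    ← integral_sub i1 i4]
  refine setIntegral_nonneg measurableSet_Ioi fun t ht => ?_
  have ht : 0 < t := ht
  rw [cfc_integrand hp1.ne ht hM, cfc_integrand hp1.ne ht hN, cfc_integrand hp1.ne ht hR]
  have key : t • 1 + (a • (Xᴴ * M * X) + b • (Yᴴ * N * Y)) =
      a • (Xᴴ * (t • 1 + M) * X) + b • (Yᴴ * (t • 1 + N) * Y) := by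
    have hXY' : t • (1 : Matrix (Fin n) (Fin n) ℂ) = t • (a • (Xᴴ * X) + b • (Yᴴ * Y)) := by
      rw [hXY]
    simp only [mul_add, add_mul, smul_add, mul_smul_comm, smul_mul_assoc, mul_one]
    rw [hXY', smul_add, smul_comm t a, smul_comm t b]
    abel
  have hR' := posDef_shift ht hR
  rw [key] at hR' ⊢
  have h := qf_nonneg (resolv_two (posDef_shift ht hM) (posDef_shift ht hN) ha hb hXY hR') v
  have h1 : a * qf 1 (X *ᵥ v) + b * qf 1 (Y *ᵥ v) = qf 1 v := by
    rw [← qf_conj, ← qf_conj, mul_one, mul_one, ← qf_smul, ← qf_smul, ← qf_add, hXY]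
  simp only [qf_sub, qf_add, qf_smul, qf_conj] at h ⊢
  have htp : 0 < t ^ p := Real.rpow_pos_of_pos ht p
  have := mul_nonneg htp.le h
  rw [← h1]
  linarith

/-- weighted geometric mean -/
noncomputable def gm (p : ℝ) (A C : Matrix (Fin n) (Fin n) ℂ) : Matrix (Fin n) (Fin n) ℂ :=
  mpow C (1 / 2) * mpow (mpow C (-(1 / 2)) * A * mpow C (-(1 / 2))) p * mpow C (1 / 2)

lemma posDef_conj {A S T : Matrix (Fin n) (Fin n) ℂ} (hA : A.PosDef) (hS : S.IsHermitian)
    (h : S * T = 1) : (S * A * S).PosDef := by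
  have hu : IsUnit S := IsUnit.of_mul_eq_one T h
  have := (Matrix.IsUnit.posDef_star_left_conjugate_iff (x := A) hu).mpr hA
  rwa [star_eq_conjTranspose, hS.eq] at this

lemma posDef_comb {A B : Matrix (Fin n) (Fin n) ℂ} (hA : A.PosDef) (hB : B.PosDef) {a : ℝ}
    (h0 : 0 ≤ a) (h1 : a ≤ 1) : (a • A + (1 - a) • B).PosDef := by
  rcases h0.eq_or_lt with rfl | h0
  · simpa using hB
  · exact (hA.smul h0).add_posSemidef (hB.posSemidef.smul (by linarith))

lemma gm_concave {p : ℝ} (hp0 : 0 < p) (hp1 : p ≤ 1) {A₁ C₁ A₂ C₂ : Matrix (Fin n) (Fin n) ℂ}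
    (hA₁ : A₁.PosDef) (hC₁ : C₁.PosDef) (hA₂ : A₂.PosDef) (hC₂ : C₂.PosDef)
    {a : ℝ} (h0 : 0 ≤ a) (h1 : a ≤ 1) :
    (gm p (a • A₁ + (1 - a) • A₂) (a • C₁ + (1 - a) • C₂)
      - (a • gm p A₁ C₁ + (1 - a) • gm p A₂ C₂)).PosSemidef := by
  have hC := posDef_comb hC₁ hC₂ h0 h1
  have hA := posDef_comb hA₁ hA₂ h0 h1
  unfold gm
  set C := a • C₁ + (1 - a) • C₂ with hCdef
  set A := a • A₁ + (1 - a) • A₂ with hAdef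
  clear_value C A
  have c1 := mpow_half_neg hC₁
  have c2 := mpow_half_neg hC₂
  have c3 := mpow_half_neg hC
  have d1 := mpow_neg_half hC₁
  have d2 := mpow_neg_half hC₂
  have d3 := mpow_neg_half hC
  have s1 := mpow_half_half hC₁
  have s2 := mpow_half_half hC₂
  have s3 := mpow_half_half hC
  have k1 := mpow_herm hC₁.isHermitian (1/2)
  have k2 := mpow_herm hC₂.isHermitian (1/2)
  have k3 := mpow_herm hC.isHermitian (1/2)
  have l1 := mpow_herm hC₁.isHermitian (-(1/2))
  have l2 := mpow_herm hC₂.isHermitian (-(1/2))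
  have l3 := mpow_herm hC.isHermitian (-(1/2))
  generalize mpow C₁ (1/2) = S₁ at *
  generalize mpow C₂ (1/2) = S₂ at *
  generalize mpow C (1/2) = S at *
  generalize mpow C₁ (-(1/2)) = T₁ at *
  generalize mpow C₂ (-(1/2)) = T₂ at *
  generalize mpow C (-(1/2)) = T at *
  have hM := posDef_conj hA₁ l1 d1
  have hN := posDef_conj hA₂ l2 d2
  have hR := posDef_conj hA l3 d3
  have eX : (S₁ * T)ᴴ = T * S₁ := by rw [conjTranspose_mul, l3.eq, k1.eq]
  have eY : (S₂ * T)ᴴ = T * S₂ := by rw [conjTranspose_mul, l3.eq, k2.eq]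
  have f1 : (S₁ * T)ᴴ * (S₁ * T) = T * C₁ * T := by
    rw [eX, ← s1]; noncomm_ring
  have f2 : (S₂ * T)ᴴ * (S₂ * T) = T * C₂ * T := by
    rw [eY, ← s2]; noncomm_ring
  have hXY : a • ((S₁ * T)ᴴ * (S₁ * T)) + (1 - a) • ((S₂ * T)ᴴ * (S₂ * T)) = 1 := by
    have : T * C * T = 1 := by
      rw [← s3, ← Matrix.mul_assoc, d3, Matrix.one_mul, c3]
    rw [f1, f2, ← this, hCdef]
    simp only [mul_add, add_mul, mul_smul_comm, smul_mul_assoc]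
  have g1 : (S₁ * T)ᴴ * (T₁ * A₁ * T₁) * (S₁ * T) = T * A₁ * T := by
    have : T * S₁ * (T₁ * A₁ * T₁) * (S₁ * T) = T * (S₁ * T₁) * A₁ * (T₁ * S₁) * T := by noncomm_ring
    rw [eX, this, c1, d1]; simp
  have g2 : (S₂ * T)ᴴ * (T₂ * A₂ * T₂) * (S₂ * T) = T * A₂ * T := by
    have : T * S₂ * (T₂ * A₂ * T₂) * (S₂ * T) = T * (S₂ * T₂) * A₂ * (T₂ * S₂) * T := by noncomm_ring
    rw [eY, this, c2, d2]; simp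
  have hsum : a • ((S₁ * T)ᴴ * (T₁ * A₁ * T₁) * (S₁ * T)) +
      (1 - a) • ((S₂ * T)ᴴ * (T₂ * A₂ * T₂) * (S₂ * T)) = T * A * T := by
    rw [g1, g2, hAdef]
    simp only [mul_add, add_mul, mul_smul_comm, smul_mul_assoc]
  have hJ := jensen hp0 hp1 hM hN h0 (sub_nonneg.mpr h1) hXY (by rw [hsum]; exact hR)
  rw [hsum, eX, eY] at hJ
  have := hJ.conjTranspose_mul_mul_same S
  rw [k3.eq] at this
  convert this using 1
  have w1 : ∀ W : Matrix (Fin n) (Fin n) ℂ, S * (T * S₁ * W * (S₁ * T)) * S = S₁ * W * S₁ := by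
    intro W
    have : S * (T * S₁ * W * (S₁ * T)) * S = (S * T) * S₁ * W * S₁ * (T * S) := by noncomm_ring
    rw [this, c3, d3]; simp
  have w2 : ∀ W : Matrix (Fin n) (Fin n) ℂ, S * (T * S₂ * W * (S₂ * T)) * S = S₂ * W * S₂ := by
    intro W
    have : S * (T * S₂ * W * (S₂ * T)) * S = (S * T) * S₂ * W * S₂ * (T * S) := by noncomm_ring
    rw [this, c3, d3]; simp
  rw [mul_sub, sub_mul, mul_add, add_mul, mul_smul_comm, smul_mul_assoc, mul_smul_comm,
    smul_mul_assoc, w1, w2]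
end aux2
section l2
open scoped Matrix.Norms.L2Operator
lemma cfc_cont_aux {n : ℕ} (f : ℝ → ℝ) (hf : Continuous f) (M : ℝ → Matrix (Fin n) (Fin n) ℂ)
    (hc : Continuous M) (hM : ∀ l, (M l).IsHermitian) : Continuous (fun l => cfc f (M l)) := by
  rw [← continuousOn_univ]
  exact ContinuousOn.cfc_of_mem_nhdsSet (p := IsSelfAdjoint) (s := Set.univ) f Filter.univ_mem
    hc.continuousOn (fun x _ => hM x) hf.continuousOn
end l2

section aux3
variable {n : ℕ}

lemma herm_comb {A B : Matrix (Fin n) (Fin n) ℂ} (hA : A.IsHermitian) (hB : B.IsHermitian)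
    (a b : ℝ) : (a • A + b • B).IsHermitian :=
  (hA.smul (IsSelfAdjoint.all a)).add (hB.smul (IsSelfAdjoint.all b))

lemma gm_cont {p : ℝ} (hp0 : 0 < p) {A B C : Matrix (Fin n) (Fin n) ℂ} (hA : A.IsHermitian)
    (hB : B.IsHermitian) (hC : C.IsHermitian) :
    Continuous (fun l : ℝ => gm p (l • A + (1 - l) • B) C) := by
  have hh : ∀ l : ℝ, (mpow C (-(1 / 2)) * (l • A + (1 - l) • B) * mpow C (-(1 / 2))).IsHermitian := by
    intro l
    have := isHermitian_conjTranspose_mul_mul (mpow C (-(1 / 2))) (herm_comb hA hB l (1 - l))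
    rwa [(mpow_herm hC _).eq] at this
  unfold gm
  simp only [mpow_eq_cfc (hh _)]
  refine Continuous.mul (Continuous.mul continuous_const ?_) continuous_const
  refine cfc_cont_aux _ (Real.continuous_rpow_const hp0.le) _ ?_ hh
  fun_prop

lemma lin_int {E F : Type*} [NormedAddCommGroup E] [NormedSpace ℝ E] [FiniteDimensional ℝ E]
    [NormedAddCommGroup F] [NormedSpace ℝ F] [FiniteDimensional ℝ F] (L : E →ₗ[ℝ] F) {f : ℝ → E}
    (hf : Continuous f) :
    L (∫ l in Set.Icc (0:ℝ) 1, f l) = ∫ l in Set.Icc (0:ℝ) 1, L (f l) := by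
  have : CompleteSpace E := FiniteDimensional.complete ℝ E
  have : CompleteSpace F := FiniteDimensional.complete ℝ F
  exact ((LinearMap.toContinuousLinearMap L).integral_comp_comm
    (hf.continuousOn.integrableOn_Icc)).symm

lemma comb_int {E : Type*} [NormedAddCommGroup E] [NormedSpace ℝ E] {f g h : ℝ → E}
    (hf : Continuous f) (hg : Continuous g) (hh : Continuous h) (a b : ℝ) :
    ∫ l in Set.Icc (0:ℝ) 1, (f l - (a • g l + b • h l)) =
      (∫ l in Set.Icc (0:ℝ) 1, f l) - (a • (∫ l in Set.Icc (0:ℝ) 1, g l)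
        + b • (∫ l in Set.Icc (0:ℝ) 1, h l)) := by
  rw [integral_sub, integral_add, integral_smul, integral_smul]
  all_goals exact Continuous.integrableOn_Icc (by fun_prop)

lemma psd_integral {f : ℝ → Matrix (Fin n) (Fin n) ℂ} (hf : Continuous f)
    (h : ∀ l ∈ Set.Icc (0:ℝ) 1, (f l).PosSemidef) : (∫ l in Set.Icc (0:ℝ) 1, f l).PosSemidef := by
  apply psd_of_qf
  · let L : Matrix (Fin n) (Fin n) ℂ →ₗ[ℝ] Matrix (Fin n) (Fin n) ℂ :=
      { toFun := fun M => Mᴴ, map_add' := by simp, map_smul' := by simp }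
    have := lin_int L (f := f) (by exact hf)
    change L (∫ l in Set.Icc (0:ℝ) 1, f l) = _
    rw [this]
    exact setIntegral_congr_fun measurableSet_Icc fun l hl => (h l hl).isHermitian.eq
  · intro v
    let L : Matrix (Fin n) (Fin n) ℂ →ₗ[ℝ] ℝ :=
      { toFun := fun M => qf M v, map_add' := fun _ _ => qf_add _ _ _,
        map_smul' := fun _ _ => qf_smul _ _ _ }
    have := lin_int L (f := f) (by exact hf)
    change 0 ≤ L (∫ l in Set.Icc (0:ℝ) 1, f l)
    rw [this]
    exact setIntegral_nonneg measurableSet_Icc fun l hl => qf_nonneg (h l hl) v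

lemma F3map_eq (p : ℝ) (A B C : Matrix (Fin n) (Fin n) ℂ) :
    F3map p A B C = (p + 1) • ∫ l in Set.Icc (0 : ℝ) 1, gm p (l • A + (1 - l) • B) C := rfl

lemma F3map_scalar {p t₁ t₂ t₃ : ℝ} (h1 : 0 < t₁) (h2 : 0 < t₂) (h3 : 0 < t₃) :
    F3map p (t₁ • (1 : Matrix (Fin n) (Fin n) ℂ)) (t₂ • 1) (t₃ • 1) =
      ((p + 1) * (∫ l in (0:ℝ)..1, (l * t₁ + (1 - l) * t₂) ^ p) * t₃ ^ (1 - p)) • 1 := by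
  have : ∀ l ∈ Set.Icc (0:ℝ) 1, gm p (l • (t₁ • (1 : Matrix (Fin n) (Fin n) ℂ))
      + (1 - l) • (t₂ • 1)) (t₃ • 1) = ((l * t₁ + (1 - l) * t₂) ^ p * t₃ ^ (1 - p)) • 1 := by
    rintro l ⟨hl0, hl1⟩
    have hl : 0 ≤ l * t₁ + (1 - l) * t₂ :=
      add_nonneg (mul_nonneg hl0 h1.le) (mul_nonneg (by linarith) h2.le)
    unfold gm
    rw [mpow_smul_one, mpow_smul_one, smul_smul, smul_smul, ← add_smul]
    simp only [smul_mul_assoc, mul_smul_comm, one_mul, mul_one, smul_smul]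
    rw [mpow_smul_one]
    simp only [smul_mul_assoc, mul_smul_comm, one_mul, mul_one, smul_smul]
    congr 1
    have e : t₃ ^ (-(1/2) : ℝ) * ((l * t₁ + (1 - l) * t₂) * t₃ ^ (-(1/2) : ℝ)) =
        t₃⁻¹ * (l * t₁ + (1 - l) * t₂) := by
      rw [mul_comm (l * t₁ + (1 - l) * t₂), ← mul_assoc, ← Real.rpow_add h3, ← Real.rpow_neg_one]
      norm_num
    have e2 : t₃ ^ (1/2 : ℝ) * t₃ ^ (1/2 : ℝ) = t₃ := by
      rw [← Real.rpow_add h3]; norm_num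
    rw [Real.rpow_sub h3, Real.rpow_one]
    rw [e, Real.mul_rpow (by positivity) hl, Real.inv_rpow h3.le]
    field_simp
    linear_combination ((l * t₁ + (1 - l) * t₂) ^ p) * e2
  rw [F3map_eq, setIntegral_congr_fun measurableSet_Icc this, integral_smul_const,
    integral_mul_const, integral_Icc_eq_integral_Ioc, ← intervalIntegral.integral_of_le zero_le_one,
    smul_smul, mul_assoc]
end aux3

theorem stmt10 (p : ℝ) (hp0 : 0 < p) (hp1 : p ≤ 1) :
    (∀ (n : ℕ) (A₁ B₁ C₁ A₂ B₂ C₂ : Matrix (Fin n) (Fin n) ℂ),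
      A₁.PosDef → B₁.PosDef → C₁.PosDef → A₂.PosDef → B₂.PosDef → C₂.PosDef →
      ∀ α : ℝ, 0 ≤ α → α ≤ 1 →
      (F3map p (α • A₁ + (1 - α) • A₂) (α • B₁ + (1 - α) • B₂)
          (α • C₁ + (1 - α) • C₂) -
        (α • F3map p A₁ B₁ C₁ + (1 - α) • F3map p A₂ B₂ C₂)).PosSemidef) ∧
    (∀ t₁ t₂ t₃ : ℝ, 0 < t₁ → 0 < t₂ → 0 < t₃ → t₁ ≠ t₂ →
      F3map p (t₁ • (1 : Matrix (Fin 1) (Fin 1) ℂ)) (t₂ • 1) (t₃ • 1) =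
        ((t₁ ^ (p + 1) - t₂ ^ (p + 1)) / (t₁ - t₂) * t₃ ^ (1 - p)) • 1) ∧
    (∀ t₁ t₃ : ℝ, 0 < t₁ → 0 < t₃ →
      F3map p (t₁ • (1 : Matrix (Fin 1) (Fin 1) ℂ)) (t₁ • 1) (t₃ • 1) =
        ((p + 1) * t₁ ^ p * t₃ ^ (1 - p)) • 1) := by
  refine ⟨?_, ?_, ?_⟩
  · intro n A₁ B₁ C₁ A₂ B₂ C₂ hA₁ hB₁ hC₁ hA₂ hB₂ hC₂ α h0 h1
    have hC := posDef_comb hC₁ hC₂ h0 h1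
    have i1 := gm_cont hp0 hA₁.isHermitian hB₁.isHermitian hC₁.isHermitian
    have i2 := gm_cont hp0 hA₂.isHermitian hB₂.isHermitian hC₂.isHermitian
    have i3 := gm_cont hp0 (posDef_comb hA₁ hA₂ h0 h1).isHermitian
      (posDef_comb hB₁ hB₂ h0 h1).isHermitian hC.isHermitian
    have hpsd := psd_integral (f := fun l : ℝ => gm p (l • (α • A₁ + (1 - α) • A₂)
        + (1 - l) • (α • B₁ + (1 - α) • B₂)) (α • C₁ + (1 - α) • C₂)
        - (α • gm p (l • A₁ + (1 - l) • B₁) C₁ + (1 - α) • gm p (l • A₂ + (1 - l) • B₂) C₂))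
      (i3.sub ((i1.const_smul α).add (i2.const_smul (1 - α))))
      (fun l hl => by
      have := gm_concave hp0 hp1 (posDef_comb hA₁ hB₁ hl.1 hl.2) hC₁
        (posDef_comb hA₂ hB₂ hl.1 hl.2) hC₂ h0 h1
      convert this using 3
      simp only [smul_add, smul_smul]
      rw [mul_comm l α, mul_comm l (1 - α), mul_comm (1 - l) α, mul_comm (1 - l) (1 - α)]
      abel)
    have hpsd := hpsd.smul (show (0:ℝ) ≤ p + 1 by linarith)
    have e := comb_int (by exact i3) (by exact i1) (by exact i2) α (1 - α)
    rw [e] at hpsd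
    rw [F3map_eq, F3map_eq, F3map_eq, smul_comm α (p + 1), smul_comm (1 - α) (p + 1), ← smul_add,
      ← smul_sub]
    exact hpsd
  · intro t₁ t₂ t₃ h1 h2 h3 hne
    rw [F3map_scalar h1 h2 h3]
    congr 2
    have hd : t₁ - t₂ ≠ 0 := sub_ne_zero.mpr hne
    have : ∀ l : ℝ, (l * t₁ + (1 - l) * t₂) ^ p = (fun x : ℝ => x ^ p) ((t₁ - t₂) * l + t₂) := by
      intro l; simp only; congr 1; ring
    simp only [this]
    rw [intervalIntegral.integral_comp_mul_add (fun x : ℝ => x ^ p) hd]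
    simp only [mul_zero, zero_add, mul_one, sub_add_cancel]
    rw [integral_rpow (Or.inl (by linarith))]
    have : p + 1 ≠ 0 := by linarith
    rw [smul_eq_mul]
    field_simp
  · intro t₁ t₃ h1 h3
    rw [F3map_scalar h1 h1 h3]
    have : ∀ l : ℝ, (l * t₁ + (1 - l) * t₁) ^ p = t₁ ^ p := by
      intro l; congr 1; ring
    simp [this]
end
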